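/- Let X = ℓ∞(ℕ,(n_i)) and for each i ∈ ℕ let A_i ⊆ ℝ^{n_i} be nonempty and closed. Assume A := X ∩ ∏_{i∈ℕ} A_i is nonempty. Then for every x ∈ X there exists y* ∈ A such that |x|_A = sup_{i∈ℕ} |x_i|_{A_i} = |x − y*|_∞; in particular the distance |x|_A equals the supremum of the componentwise distances and is attained. -/

import Mathlib

noncomputable section

section DistanceLemma

variable {E : ℕ → Type*} [∀ i, NormedAddCommGroup (E i)]

/-- Membership in `X = ℓ∞(ℕ,(n_i))`: a uniformly bounded sequence. -/
def Bdd (x : ∀ i, E i) : Prop :=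
  ∃ C : ℝ, ∀ i, ‖x i‖ ≤ C

/-- The sup norm `|x|_∞ = sup_i |x_i|`. -/
def supNorm (x : ∀ i, E i) : ℝ :=
  ⨆ i, ‖x i‖

/-- The set `A = X ∩ ∏_i A_i`. -/
def setA (A : ∀ i, Set (E i)) : Set (∀ i, E i) :=
  {y | Bdd y ∧ ∀ i, y i ∈ A i}

/-- The distance `|x|_A = inf_{y ∈ A} |x − y|_∞` from `x` to a set `A ⊆ X`. -/
def distA (x : ∀ i, E i) (A : Set (∀ i, E i)) : ℝ :=
  sInf ((fun y => supNorm (x - y)) '' A)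

/-- A set is proximinal if every point of the ambient space has a nearest point in it. This is
what the coordinate sets `A i` need for the distance to `setA A` to be attained. -/
def IsProximinal {α : Type*} [PseudoMetricSpace α] (s : Set α) : Prop :=
  ∀ x, ∃ y ∈ s, Metric.infDist x s = dist x y

theorem isProximinal_of_isClosed {α : Type*} [PseudoMetricSpace α] [ProperSpace α] {s : Set α}
    (hs : IsClosed s) (hne : s.Nonempty) : IsProximinal s :=
  hs.exists_infDist_eq_dist hne

section Bounded

variable {x y : ∀ i, E i}

theorem Bdd.sub (hx : Bdd x) (hy : Bdd y) : Bdd (x - y) := by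
  obtain ⟨C, hC⟩ := hx
  obtain ⟨D, hD⟩ := hy
  exact ⟨C + D, fun i => norm_sub_le_of_le (hC i) (hD i)⟩

theorem Bdd.of_norm_le (hx : Bdd x) (hle : ∀ i, ‖y i‖ ≤ ‖x i‖) : Bdd y := by
  obtain ⟨C, hC⟩ := hx
  exact ⟨C, fun i => (hle i).trans (hC i)⟩

theorem Bdd.bddAbove_range_norm (hx : Bdd x) : BddAbove (Set.range fun i => ‖x i‖) := by
  obtain ⟨C, hC⟩ := hx
  exact ⟨C, Set.forall_mem_range.2 hC⟩

theorem supNorm_le_supNorm (hx : Bdd x) (hle : ∀ i, ‖y i‖ ≤ ‖x i‖) : supNorm y ≤ supNorm x :=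
  ciSup_mono hx.bddAbove_range_norm hle

end Bounded

section NearestPoint

variable {A : ∀ i, Set (E i)} {x y w : ∀ i, E i}

theorem supNorm_sub_eq_iSup_infDist (hy : ∀ i, Metric.infDist (x i) (A i) = dist (x i) (y i)) :
    supNorm (x - y) = ⨆ i, Metric.infDist (x i) (A i) :=
  iSup_congr fun i => by rw [hy i, dist_eq_norm, Pi.sub_apply]

/- Coordinatewise nearest points beat every competitor in all coordinates at once: comparing with
one element of `setA A` bounds `y`, and comparing with all of them minimises the sup norm. -/
theorem norm_sub_le_of_infDist_eq_dist
    (hy : ∀ i, Metric.infDist (x i) (A i) = dist (x i) (y i)) (hw : ∀ i, w i ∈ A i) (i : ℕ) :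
    ‖(x - y) i‖ ≤ ‖(x - w) i‖ := by
  simpa only [Pi.sub_apply, ← dist_eq_norm, ← hy i] using Metric.infDist_le_dist_of_mem (hw i)

theorem bdd_of_infDist_eq_dist (hA : (setA A).Nonempty) (hx : Bdd x)
    (hy : ∀ i, Metric.infDist (x i) (A i) = dist (x i) (y i)) : Bdd y := by
  obtain ⟨z, hz, hzA⟩ := hA
  have hxy : Bdd (x - y) := (hx.sub hz).of_norm_le (norm_sub_le_of_infDist_eq_dist hy hzA)
  simpa only [sub_sub_cancel] using hx.sub hxy

theorem distA_eq_supNorm_sub (hx : Bdd x) (hyA : y ∈ setA A)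
    (hy : ∀ i, Metric.infDist (x i) (A i) = dist (x i) (y i)) :
    distA x (setA A) = supNorm (x - y) := by
  have hleast : IsLeast ((fun w => supNorm (x - w)) '' setA A) (supNorm (x - y)) := by
    refine ⟨Set.mem_image_of_mem _ hyA, Set.forall_mem_image.2 fun w ⟨hw, hwA⟩ => ?_⟩
    exact supNorm_le_supNorm (hx.sub hw) (norm_sub_le_of_infDist_eq_dist hy hwA)
  exact hleast.csInf_eq

end NearestPoint

theorem stmt3_general {A : ∀ i, Set (E i)} (hprox : ∀ i, IsProximinal (A i))
    (hA : (setA A).Nonempty) {x : ∀ i, E i} (hx : Bdd x) :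
    ∃ ystar ∈ setA A,
      distA x (setA A) = ⨆ i, Metric.infDist (x i) (A i) ∧
      distA x (setA A) = supNorm (x - ystar) := by
  choose y hyA hy using fun i => hprox i (x i)
  have hmem : y ∈ setA A := ⟨bdd_of_infDist_eq_dist hA hx hy, hyA⟩
  have hdist : distA x (setA A) = supNorm (x - y) := distA_eq_supNorm_sub hx hmem hy
  exact ⟨y, hmem, hdist.trans (supNorm_sub_eq_iSup_infDist hy), hdist⟩

/-- The distance from `x ∈ X` to `A = X ∩ ∏ A_i` equals `sup_i dist(x_i, A_i)` and is
attained at some `y* ∈ A`. -/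
theorem stmt3
    [∀ i, NormedSpace ℝ (E i)] [∀ i, FiniteDimensional ℝ (E i)]
    (A : ∀ i, Set (E i)) (hne : ∀ i, (A i).Nonempty) (hcl : ∀ i, IsClosed (A i))
    (hA : (setA A).Nonempty) :
    ∀ x : ∀ i, E i, Bdd x → ∃ ystar ∈ setA A,
      distA x (setA A) = ⨆ i, Metric.infDist (x i) (A i) ∧
      distA x (setA A) = supNorm (x - ystar) := by
  have (i : ℕ) : ProperSpace (E i) := FiniteDimensional.proper ℝ (E i)
  exact fun _ => stmt3_general (fun i => isProximinal_of_isClosed (hcl i) (hne i)) hA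

end DistanceLemma
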